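/- For every τ in the upper half-plane, the theta constants satisfy Jacobi's identity θ₂(0,τ)⁴ + θ₄(0,τ)⁴ = θ₃(0,τ)⁴. Equivalently, setting k = θ₂(0,τ)²/θ₃(0,τ)² and k′ = θ₄(0,τ)²/θ₃(0,τ)², one has k² + k′² = 1. -/

import Mathlib

open Complex

/-- Jacobi theta function θ₁(z,τ), with nome `q = exp(iπτ)`. -/
noncomputable def theta1 (z τ : ℂ) : ℂ :=
  -I * ∑' n : ℤ, (-1 : ℂ) ^ n * Complex.exp ((Real.pi : ℂ) * I * τ * ((n : ℂ) + 1 / 2) ^ 2) *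
    Complex.exp (I * (2 * (n : ℂ) + 1) * z)

/-- Jacobi theta function θ₂(z,τ), with nome `q = exp(iπτ)`. -/
noncomputable def theta2 (z τ : ℂ) : ℂ :=
  ∑' n : ℤ, Complex.exp ((Real.pi : ℂ) * I * τ * ((n : ℂ) + 1 / 2) ^ 2) *
    Complex.exp (I * (2 * (n : ℂ) + 1) * z)

/-- Jacobi theta function θ₃(z,τ), with nome `q = exp(iπτ)`. -/
noncomputable def theta3 (z τ : ℂ) : ℂ :=
  ∑' n : ℤ, Complex.exp ((Real.pi : ℂ) * I * τ * (n : ℂ) ^ 2) *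
    Complex.exp (2 * I * (n : ℂ) * z)

/-- Jacobi theta function θ₄(z,τ), with nome `q = exp(iπτ)`. -/
noncomputable def theta4 (z τ : ℂ) : ℂ :=
  ∑' n : ℤ, (-1 : ℂ) ^ n * Complex.exp ((Real.pi : ℂ) * I * τ * (n : ℂ) ^ 2) *
    Complex.exp (2 * I * (n : ℂ) * z)

open Filter
open scoped Real Topology

/-!
Reindexing `ℤ × ℤ` by `(m, n) = (p + r, p - r)` or `(p + r + 1, p - r)` according to the parity of
`m + n` turns `m² + n²` into twice a sum of two squares, so a product of theta series at `τ` is a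
combination of products at `2τ`. On theta constants this gives `θ₃² = A² + B²`, `θ₄² = A² - B²` and
`θ₂² = 2AB` with `A = θ₃(0, 2τ)` and `B = θ₂(0, 2τ)`, whence the quartic identity.

Combining the same relations with the quartic identity at `2τ` gives
`θ₄(0, 2τ)⁴ = θ₃(0, τ)² θ₄(0, τ)²`, so that a zero of either constant at `τ` would propagate to
`θ₄(0, 2ⁿτ)` for all `n ≥ 1`, although these values tend to `1`.
-/

lemma bijective_sumElim_add_sub :
    Function.Bijective (Sum.elim (fun p : ℤ × ℤ ↦ (p.1 + p.2, p.1 - p.2))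
      fun p : ℤ × ℤ ↦ (p.1 + p.2 + 1, p.1 - p.2)) := by
  constructor
  · rintro (⟨a, b⟩ | ⟨a, b⟩) (⟨c, d⟩ | ⟨c, d⟩) h <;>
      simp only [Sum.elim_inl, Sum.elim_inr, Prod.mk.injEq, Sum.inl.injEq, Sum.inr.injEq,
        reduceCtorEq] at h ⊢ <;> omega
  · rintro ⟨m, n⟩
    obtain ⟨p, hp | hp⟩ := Int.even_or_odd' (m + n)
    · exact ⟨Sum.inl (p, m - p), by simp only [Sum.elim_inl, Prod.mk.injEq]; omega⟩
    · exact ⟨Sum.inr (p, m - p - 1), by simp only [Sum.elim_inr, Prod.mk.injEq]; omega⟩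

lemma tsum_int_prod_eq_tsum_add_sub_add_tsum {α : Type*} [AddCommGroup α] [UniformSpace α]
    [IsUniformAddGroup α] [CompleteSpace α] [T2Space α] {f : ℤ × ℤ → α} (hf : Summable f) :
    ∑' p, f p = ∑' p : ℤ × ℤ, f (p.1 + p.2, p.1 - p.2) +
      ∑' p : ℤ × ℤ, f (p.1 + p.2 + 1, p.1 - p.2) := by
  have hφ := bijective_sumElim_add_sub
  have hs := hf.comp_injective hφ.injective
  rw [← (Equiv.ofBijective _ hφ).tsum_eq f]
  exact Summable.tsum_sum (hs.comp_injective Sum.inl_injective)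
    (hs.comp_injective Sum.inr_injective)

/-- The function `u ↦ exp(πiτu² + 2iuz)`, whose values on the translates of `ℤ` are the summands of
the theta series. -/
noncomputable def thetaTerm (u z τ : ℂ) : ℂ :=
  cexp (π * I * τ * u ^ 2 + 2 * I * u * z)

lemma thetaTerm_mul_thetaTerm (u v x y τ : ℂ) :
    thetaTerm u x τ * thetaTerm v y τ =
      thetaTerm ((u + v) / 2) (x + y) (2 * τ) * thetaTerm ((u - v) / 2) (x - y) (2 * τ) := by
  simp only [thetaTerm, ← Complex.exp_add]
  congr 1
  ring

lemma summable_norm_thetaTerm_intCast_add (a z : ℂ) {τ : ℂ} (hτ : 0 < τ.im) :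
    Summable fun n : ℤ ↦ ‖thetaTerm (n + a) z τ‖ := by
  refine (((summable_jacobiTheta₂_term_iff (z / π + a * τ) τ).mpr hτ).mul_right
    (thetaTerm a z τ)).norm.congr fun n ↦ ?_
  rw [jacobiTheta₂_term, thetaTerm, thetaTerm, ← Complex.exp_add]
  congr 2
  field_simp
  ring

/-- The theta series with characteristic `a`, in the normalization of `theta2` and `theta3`, which
are the cases `a = 1 / 2` and `a = 0`. There is no second characteristic, since that one is a
translation of `z`. -/
noncomputable def thetaChar (a z τ : ℂ) : ℂ :=
  ∑' n : ℤ, thetaTerm (n + a) z τ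

namespace thetaChar

lemma add_one (a z τ : ℂ) : thetaChar (a + 1) z τ = thetaChar a z τ := by
  rw [thetaChar, thetaChar, ← (Equiv.addRight (1 : ℤ)).tsum_eq fun n ↦ thetaTerm (n + a) z τ]
  refine tsum_congr fun n ↦ ?_
  rw [Equiv.coe_addRight, Int.cast_add, Int.cast_one, add_right_comm, add_assoc]

lemma add_pi (a z τ : ℂ) :
    thetaChar a (z + π) τ = cexp (2 * π * I * a) * thetaChar a z τ := by
  rw [thetaChar, thetaChar, ← tsum_mul_left]
  refine tsum_congr fun n ↦ ?_
  calc
    thetaTerm (n + a) (z + π) τ = cexp (2 * π * I * a) * thetaTerm (n + a) z τ *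
        cexp (n * (2 * π * I)) := by
      simp only [thetaTerm, ← Complex.exp_add]
      congr 1
      ring
    _ = cexp (2 * π * I * a) * thetaTerm (n + a) z τ := by
      rw [exp_int_mul_two_pi_mul_I, mul_one]

lemma mul_eq_tsum (a b x y : ℂ) {τ : ℂ} (hτ : 0 < τ.im) :
    thetaChar a x τ * thetaChar b y τ =
      ∑' p : ℤ × ℤ, thetaTerm (p.1 + a) x τ * thetaTerm (p.2 + b) y τ :=
  tsum_mul_tsum_of_summable_norm (summable_norm_thetaTerm_intCast_add a x hτ)
    (summable_norm_thetaTerm_intCast_add b y hτ)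

theorem mul_eq_add (a b x y : ℂ) {τ : ℂ} (hτ : 0 < τ.im) :
    thetaChar a x τ * thetaChar b y τ =
      thetaChar ((a + b) / 2) (x + y) (2 * τ) * thetaChar ((a - b) / 2) (x - y) (2 * τ) +
        thetaChar ((a + b + 1) / 2) (x + y) (2 * τ) *
          thetaChar ((a - b + 1) / 2) (x - y) (2 * τ) := by
  have h2τ : 0 < (2 * τ).im := by simpa using hτ
  have hsum := summable_mul_of_summable_norm (summable_norm_thetaTerm_intCast_add a x hτ)
    (summable_norm_thetaTerm_intCast_add b y hτ)
  rw [mul_eq_tsum _ _ _ _ hτ, mul_eq_tsum _ _ _ _ h2τ, mul_eq_tsum _ _ _ _ h2τ,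
    tsum_int_prod_eq_tsum_add_sub_add_tsum hsum]
  congr 1 <;> refine tsum_congr fun p ↦ ?_ <;> rw [thetaTerm_mul_thetaTerm] <;> congr 2 <;>
    push_cast <;> ring

end thetaChar

lemma theta2_eq_thetaChar (z τ : ℂ) : theta2 z τ = thetaChar (1 / 2) z τ := by
  refine tsum_congr fun n ↦ ?_
  rw [thetaTerm, ← Complex.exp_add]
  ring_nf

lemma theta3_eq_thetaChar (z τ : ℂ) : theta3 z τ = thetaChar 0 z τ := by
  simp only [theta3, thetaChar, thetaTerm, Complex.exp_add, add_zero]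

lemma theta4_eq_theta3_add_pi_div_two (z τ : ℂ) : theta4 z τ = theta3 (z + π / 2) τ := by
  refine tsum_congr fun n ↦ ?_
  rw [← exp_pi_mul_I, ← Complex.exp_int_mul, ← Complex.exp_add, ← Complex.exp_add,
    ← Complex.exp_add]
  ring_nf

lemma theta4_eq_theta3_add_one (z τ : ℂ) : theta4 z τ = theta3 z (τ + 1) := by
  refine tsum_congr fun n ↦ ?_
  have hsq : (-1 : ℂ) ^ n = (-1) ^ (n ^ 2) := by
    rcases n.even_or_odd with hn | hn
    · rw [hn.neg_one_zpow, (hn.pow_of_ne_zero two_ne_zero).neg_one_zpow]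
    · rw [hn.neg_one_zpow, hn.pow.neg_one_zpow]
  rw [hsq, ← exp_pi_mul_I, ← Complex.exp_int_mul, ← Complex.exp_add]
  push_cast
  ring_nf

lemma theta2_add_pi (z τ : ℂ) : theta2 (z + π) τ = -theta2 z τ := by
  rw [theta2_eq_thetaChar, theta2_eq_thetaChar, thetaChar.add_pi,
    show 2 * π * I * (1 / 2) = π * I by ring, exp_pi_mul_I, neg_one_mul]

lemma theta3_add_pi (z τ : ℂ) : theta3 (z + π) τ = theta3 z τ := by
  rw [theta3_eq_thetaChar, theta3_eq_thetaChar, thetaChar.add_pi, mul_zero, Complex.exp_zero,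
    one_mul]

lemma theta3_zero_eq_jacobiTheta (τ : ℂ) : theta3 0 τ = jacobiTheta τ := by
  simp only [theta3, jacobiTheta, mul_zero, Complex.exp_zero, mul_one, mul_right_comm _ τ]

lemma tendsto_jacobiTheta_comap_im_atTop : Tendsto jacobiTheta (comap im atTop) (𝓝 1) := by
  have hexp : Tendsto (fun σ : ℂ ↦ Real.exp (-π * σ.im)) (comap im atTop) (𝓝 0) :=
    Real.tendsto_exp_atBot.comp
      (tendsto_comap.const_mul_atTop_of_neg (neg_neg_of_pos Real.pi_pos))
  simpa using (isBigO_at_im_infty_jacobiTheta_sub_one.trans_tendsto hexp).add_const 1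

lemma tendsto_theta4_zero_comap_im_atTop : Tendsto (theta4 0) (comap im atTop) (𝓝 1) := by
  have hadd : Tendsto (fun σ : ℂ ↦ σ + 1) (comap im atTop) (comap im atTop) :=
    tendsto_comap_iff.mpr (tendsto_comap.congr fun σ ↦ by simp)
  refine (tendsto_jacobiTheta_comap_im_atTop.comp hadd).congr fun σ ↦ ?_
  rw [Function.comp_apply, theta4_eq_theta3_add_one, theta3_zero_eq_jacobiTheta]

section Duplication

variable (x y : ℂ) {τ : ℂ} (hτ : 0 < τ.im)
include hτ

theorem theta2_mul_theta2 :
    theta2 x τ * theta2 y τ = theta2 (x + y) (2 * τ) * theta3 (x - y) (2 * τ) +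
      theta3 (x + y) (2 * τ) * theta2 (x - y) (2 * τ) := by
  have h := thetaChar.mul_eq_add (1 / 2) (1 / 2) x y hτ
  rw [show (1 / 2 + 1 / 2 : ℂ) / 2 = 1 / 2 by norm_num,
    show (1 / 2 - 1 / 2 : ℂ) / 2 = 0 by norm_num,
    show (1 / 2 + 1 / 2 + 1 : ℂ) / 2 = 0 + 1 by norm_num,
    show (1 / 2 - 1 / 2 + 1 : ℂ) / 2 = 1 / 2 by norm_num, thetaChar.add_one] at h
  simpa only [theta2_eq_thetaChar, theta3_eq_thetaChar] using h

theorem theta3_mul_theta3 :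
    theta3 x τ * theta3 y τ = theta3 (x + y) (2 * τ) * theta3 (x - y) (2 * τ) +
      theta2 (x + y) (2 * τ) * theta2 (x - y) (2 * τ) := by
  simpa only [theta2_eq_thetaChar, theta3_eq_thetaChar, add_zero, sub_zero, zero_div, zero_add]
    using thetaChar.mul_eq_add 0 0 x y hτ

theorem theta4_mul_theta4 :
    theta4 x τ * theta4 y τ = theta3 (x + y) (2 * τ) * theta3 (x - y) (2 * τ) -
      theta2 (x + y) (2 * τ) * theta2 (x - y) (2 * τ) := by
  rw [theta4_eq_theta3_add_pi_div_two, theta4_eq_theta3_add_pi_div_two, theta3_mul_theta3 _ _ hτ,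
    show x + π / 2 + (y + π / 2) = x + y + π by ring, add_sub_add_right_eq_sub, theta2_add_pi,
    theta3_add_pi, neg_mul, ← sub_eq_add_neg]

end Duplication

section ThetaConstants

variable {τ : ℂ} (hτ : 0 < τ.im)
include hτ

lemma theta2_zero_sq : theta2 0 τ ^ 2 = 2 * theta2 0 (2 * τ) * theta3 0 (2 * τ) := by
  have h := theta2_mul_theta2 0 0 hτ
  rw [add_zero, sub_zero] at h
  linear_combination h

lemma theta3_zero_sq : theta3 0 τ ^ 2 = theta3 0 (2 * τ) ^ 2 + theta2 0 (2 * τ) ^ 2 := by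
  simpa only [sq, add_zero, sub_zero] using theta3_mul_theta3 0 0 hτ

lemma theta4_zero_sq : theta4 0 τ ^ 2 = theta3 0 (2 * τ) ^ 2 - theta2 0 (2 * τ) ^ 2 := by
  simpa only [sq, add_zero, sub_zero] using theta4_mul_theta4 0 0 hτ

theorem theta2_zero_pow_four_add_theta4_zero_pow_four :
    theta2 0 τ ^ 4 + theta4 0 τ ^ 4 = theta3 0 τ ^ 4 :=
  calc
    theta2 0 τ ^ 4 + theta4 0 τ ^ 4 = (theta2 0 τ ^ 2) ^ 2 + (theta4 0 τ ^ 2) ^ 2 := by ring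
    _ = (theta3 0 (2 * τ) ^ 2 + theta2 0 (2 * τ) ^ 2) ^ 2 := by
      rw [theta2_zero_sq hτ, theta4_zero_sq hτ]
      ring
    _ = theta3 0 τ ^ 4 := by rw [← theta3_zero_sq hτ, ← pow_mul]

lemma theta4_zero_two_mul_pow_four :
    theta4 0 (2 * τ) ^ 4 = theta3 0 τ ^ 2 * theta4 0 τ ^ 2 := by
  have h2τ : 0 < (2 * τ).im := by simpa using hτ
  rw [theta3_zero_sq hτ, theta4_zero_sq hτ]
  linear_combination theta2_zero_pow_four_add_theta4_zero_pow_four h2τ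

lemma tendsto_pow_mul_comap_im_atTop {r : ℝ} (hr : 1 < r) :
    Tendsto (fun n : ℕ ↦ (r : ℂ) ^ n * τ) atTop (comap im atTop) := by
  refine tendsto_comap_iff.mpr (((tendsto_pow_atTop_atTop_of_one_lt hr).atTop_mul_const hτ).congr
    fun n ↦ ?_)
  rw [Function.comp_apply, ← ofReal_pow, im_ofReal_mul]

theorem theta4_zero_ne_zero : theta4 0 τ ≠ 0 := by
  intro h
  have hzero (n : ℕ) : theta4 0 (2 ^ n * τ) = 0 := by
    induction n with
    | zero => simpa using h
    | succ n ih =>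
      have him : 0 < (2 ^ n * τ).im := by
        rw [← ofReal_ofNat, ← ofReal_pow, im_ofReal_mul]
        positivity
      have hpow := theta4_zero_two_mul_pow_four him
      rwa [ih, zero_pow two_ne_zero, mul_zero, pow_eq_zero_iff four_ne_zero, ← mul_assoc,
        ← pow_succ'] at hpow
  have hlim := tendsto_theta4_zero_comap_im_atTop.comp
    (tendsto_pow_mul_comap_im_atTop hτ one_lt_two)
  simp [Function.comp_def, hzero] at hlim

theorem theta3_zero_ne_zero : theta3 0 τ ≠ 0 := by
  intro h
  have h2τ : 0 < (2 * τ).im := by simpa using hτ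
  refine theta4_zero_ne_zero h2τ ?_
  have hpow := theta4_zero_two_mul_pow_four hτ
  rwa [h, zero_pow two_ne_zero, zero_mul, pow_eq_zero_iff four_ne_zero] at hpow

end ThetaConstants

theorem jacobi_theta_constant_identity (τ : ℂ) (hτ : 0 < τ.im) :
    theta2 0 τ ^ 4 + theta4 0 τ ^ 4 = theta3 0 τ ^ 4 ∧
      (theta2 0 τ ^ 2 / theta3 0 τ ^ 2) ^ 2 + (theta4 0 τ ^ 2 / theta3 0 τ ^ 2) ^ 2 = 1 := by
  have hpow := theta2_zero_pow_four_add_theta4_zero_pow_four hτ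
  refine ⟨hpow, ?_⟩
  rw [div_pow, div_pow, ← pow_mul, ← pow_mul, ← pow_mul, ← add_div, hpow]
  exact div_self (pow_ne_zero 4 (theta3_zero_ne_zero hτ))
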